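/- arXiv:1504.04802 — 3 statements merged into one kernel-verified Lean document; each statement's English description precedes it below -/
import Mathlib

section
/- Reduction lemma: every formula of gradual classical logic reduces to some formula in unit chain expansion. -/
/-!
Unit chain expansions are closed, up to reduction, under every connective; the theorem then
follows by structural induction on the formula, since reduction is compatible with contexts.

Closure under `∧` and `∨` is immediate. For `⋗`, three inductions are used. If the head is
a single `s ∈ 𝒮`, it is distributed over the `∧`/`∨`-structure of the tail (`obat_base_uce`). If the
head is a unit chain `s ⋗ T`, rule (⋗1) leaves only `s ⋗ G`, `s ⋗ T` and `s ⋗ (T ⋗ G)`, where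
`T ⋗ G` is handled by induction on the chain (`obat_chain`). A general head is distributed
by (⋗2) and (⋗3) (`obat_uce`). For `¬`, De Morgan pushes the negation down to the unit chains, where
rule (¬4) turns `¬(s ⋗ T)` into `sᶜ ∨ (s ⋗ ¬T)` and the shorter chain `T` is handled by induction
(`neg_chain`, `neg_uce`).
-/

namespace GradualLogic

/-- Elements of 𝒮 = 𝒜 ∪ {⊤, ⊥}. -/
inductive GS (A : Type) : Type
  | lit : A → GS A
  | top : GS A
  | bot : GS A

/-- Complement on 𝒮, given the involutive complement `c` on literals. -/
def GS.compl {A : Type} (c : A → A) : GS A → GS A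
  | .lit a => .lit (c a)
  | .top => .bot
  | .bot => .top

/-- Formulas of gradual classical logic: F ::= s | F ∧ F | F ∨ F | ¬F | F ⋗ F. -/
inductive GF (A : Type) : Type
  | base : GS A → GF A
  | conj : GF A → GF A → GF A
  | disj : GF A → GF A → GF A
  | neg  : GF A → GF A
  | obat : GF A → GF A → GF A

/-- One-step reduction (closure of the ¬- and ⋗-rules under subformula contexts). -/
inductive Step {A : Type} (c : A → A) : GF A → GF A → Prop
  | neg1 (x : GS A) :
      Step c (GF.neg (GF.base x)) (GF.base (GS.compl c x))
  | neg2 (F₁ F₂ : GF A) :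
      Step c (GF.neg (GF.conj F₁ F₂)) (GF.disj (GF.neg F₁) (GF.neg F₂))
  | neg3 (F₁ F₂ : GF A) :
      Step c (GF.neg (GF.disj F₁ F₂)) (GF.conj (GF.neg F₁) (GF.neg F₂))
  | neg4 (x : GS A) (F₂ : GF A) :
      Step c (GF.neg (GF.obat (GF.base x) F₂))
        (GF.disj (GF.base (GS.compl c x)) (GF.obat (GF.base x) (GF.neg F₂)))
  | ob1 (F₁ F₂ F₃ : GF A) :
      Step c (GF.obat (GF.obat F₁ F₂) F₃)
        (GF.conj (GF.obat F₁ F₃)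
          (GF.disj (GF.obat F₁ F₂) (GF.obat F₁ (GF.obat F₂ F₃))))
  | ob2 (F₁ F₂ F₃ : GF A) :
      Step c (GF.obat (GF.conj F₁ F₂) F₃) (GF.conj (GF.obat F₁ F₃) (GF.obat F₂ F₃))
  | ob3 (F₁ F₂ F₃ : GF A) :
      Step c (GF.obat (GF.disj F₁ F₂) F₃) (GF.disj (GF.obat F₁ F₃) (GF.obat F₂ F₃))
  | ob4 (F₁ F₂ F₃ : GF A) :
      Step c (GF.obat F₁ (GF.conj F₂ F₃)) (GF.conj (GF.obat F₁ F₂) (GF.obat F₁ F₃))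
  | ob5 (F₁ F₂ F₃ : GF A) :
      Step c (GF.obat F₁ (GF.disj F₂ F₃)) (GF.disj (GF.obat F₁ F₂) (GF.obat F₁ F₃))
  | conj_left {F F' : GF A} (G : GF A) :
      Step c F F' → Step c (GF.conj F G) (GF.conj F' G)
  | conj_right (F : GF A) {G G' : GF A} :
      Step c G G' → Step c (GF.conj F G) (GF.conj F G')
  | disj_left {F F' : GF A} (G : GF A) :
      Step c F F' → Step c (GF.disj F G) (GF.disj F' G)
  | disj_right (F : GF A) {G G' : GF A} :
      Step c G G' → Step c (GF.disj F G) (GF.disj F G')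
  | neg_congr {F F' : GF A} :
      Step c F F' → Step c (GF.neg F) (GF.neg F')
  | obat_left {F F' : GF A} (G : GF A) :
      Step c F F' → Step c (GF.obat F G) (GF.obat F' G)
  | obat_right (F : GF A) {G G' : GF A} :
      Step c G G' → Step c (GF.obat F G) (GF.obat F G')

/-- `Reduces c F G`: F ↦* G in finitely many (possibly zero) steps. -/
def Reduces {A : Type} (c : A → A) : GF A → GF A → Prop :=
  Relation.ReflTransGen (Step c)

/-- Unit chains s₀ ⋗ s₁ ⋗ ⋯ ⋗ s_{k+1} (right-associated, all components in 𝒮). -/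
inductive IsUnitChain {A : Type} : GF A → Prop
  | base (x y : GS A) : IsUnitChain (GF.obat (GF.base x) (GF.base y))
  | cons (x : GS A) {F : GF A} : IsUnitChain F → IsUnitChain (GF.obat (GF.base x) F)

/-- Unit chain expansion: built from elements of 𝒮 and unit chains using only ∧ and ∨. -/
inductive UCE {A : Type} : GF A → Prop
  | base (x : GS A) : UCE (GF.base x)
  | chain {F : GF A} : IsUnitChain F → UCE F
  | conj {F G : GF A} : UCE F → UCE G → UCE (GF.conj F G)
  | disj {F G : GF A} : UCE F → UCE G → UCE (GF.disj F G)

/-- Formulas in which ¬ does not occur. -/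
inductive NegFree {A : Type} : GF A → Prop
  | base (x : GS A) : NegFree (GF.base x)
  | conj {F G : GF A} : NegFree F → NegFree G → NegFree (GF.conj F G)
  | disj {F G : GF A} : NegFree F → NegFree G → NegFree (GF.disj F G)
  | obat {F G : GF A} : NegFree F → NegFree G → NegFree (GF.obat F G)

/-- A valuation frame (I, J): local interpretation I with the required conditions;
the global interpretation J is determined by I and is built into `Frame.val` below. -/
structure Frame (A : Type) (c : A → A) where
  I : List (GS A) → GS A → ℕ
  I01 : ∀ ψ x, I ψ x = 0 ∨ I ψ x = 1
  Itop : ∀ ψ, I ψ GS.top = 1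
  Ibot : ∀ ψ, I ψ GS.bot = 0
  Icompl : ∀ ψ x, I ψ (GS.compl c x) = 1 - I ψ x
  Isync : ∀ ψ ψ' x, ψ.length = ψ'.length → I ψ x = I ψ' x

/-- The valuation of a formula in unit chain expansion, relative to the sequence ψ of
𝒮-elements already traversed: a unit chain s₀ ⋗ ⋯ ⋗ s_k receives the global value
J(s₀.⋯.s_k) (the min of the local values along its prefixes), ∧ is min, ∨ is max.
(The value on formulas not in unit chain expansion is junk and never used.) -/
def Frame.valAux {A : Type} {c : A → A} (M : Frame A c) : List (GS A) → GF A → ℕ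
  | ψ, GF.base x => M.I ψ x
  | ψ, GF.conj F G => min (M.valAux ψ F) (M.valAux ψ G)
  | ψ, GF.disj F G => max (M.valAux ψ F) (M.valAux ψ G)
  | _, GF.neg _ => 0
  | ψ, GF.obat (GF.base x) G => min (M.I ψ x) (M.valAux (ψ ++ [x]) G)
  | _, GF.obat _ _ => 0

/-- `[M ⊨ F]` for F in unit chain expansion. -/
def Frame.val {A : Type} {c : A → A} (M : Frame A c) (F : GF A) : ℕ :=
  M.valAux [] F

/-- Distribute `s ⋗ -` over the ∧/∨-structure of a formula (the ⋗-reductions 4 and 5). -/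
def distOb {A : Type} (x : GS A) : GF A → GF A
  | GF.conj F G => GF.conj (distOb x F) (distOb x G)
  | GF.disj F G => GF.disj (distOb x F) (distOb x G)
  | F => GF.obat (GF.base x) F

/-- recursiveReduce on formulas in unit chain expansion: swap ∧/∨, complement the
non-chain 𝒮-elements, replace a chain with head s and tail T by
sᶜ ∨ (s ⋗ recursiveReduce T), reduced into unit chain expansion via ⋗-reductions. -/
def recursiveReduce {A : Type} (c : A → A) : GF A → GF A
  | GF.base x => GF.base (GS.compl c x)
  | GF.conj F G => GF.disj (recursiveReduce c F) (recursiveReduce c G)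
  | GF.disj F G => GF.conj (recursiveReduce c F) (recursiveReduce c G)
  | GF.obat (GF.base x) F =>
      GF.disj (GF.base (GS.compl c x)) (distOb x (recursiveReduce c F))
  | GF.obat F G => GF.obat F G
  | GF.neg F => GF.neg F

/-- Validity: every unit chain expansion that F reduces to receives value 1 in
every valuation frame. -/
def Valid {A : Type} (c : A → A) (F : GF A) : Prop :=
  ∀ (M : Frame A c) (G : GF A), UCE G → Reduces c F G → M.val G = 1

/-- The fifteen shape pairs of the bisimulation theorem. -/
inductive ShapePair {A : Type} (c : A → A) : GF A → GF A → Prop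
  | s1 (Fa Fb Fc : GF A) :
      ShapePair c (GF.obat (GF.conj Fa Fb) Fc) (GF.conj (GF.obat Fa Fc) (GF.obat Fb Fc))
  | s2 (Fa Fb Fc : GF A) :
      ShapePair c (GF.obat (GF.disj Fa Fb) Fc) (GF.disj (GF.obat Fa Fc) (GF.obat Fb Fc))
  | s3 (Fa Fb Fc : GF A) :
      ShapePair c (GF.obat Fa (GF.conj Fb Fc)) (GF.conj (GF.obat Fa Fb) (GF.obat Fa Fc))
  | s4 (Fa Fb Fc : GF A) :
      ShapePair c (GF.obat Fa (GF.disj Fb Fc)) (GF.disj (GF.obat Fa Fb) (GF.obat Fa Fc))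
  | s5 (Fa Fb Fc : GF A) :
      ShapePair c (GF.obat (GF.obat Fa Fb) Fc)
        (GF.conj (GF.obat Fa Fc) (GF.disj (GF.obat Fa Fb) (GF.obat Fa (GF.obat Fb Fc))))
  | s6 (x : GS A) :
      ShapePair c (GF.neg (GF.base x)) (GF.base (GS.compl c x))
  | s7 (F₁ F₂ : GF A) :
      ShapePair c (GF.neg (GF.conj F₁ F₂)) (GF.disj (GF.neg F₁) (GF.neg F₂))
  | s8 (F₁ F₂ : GF A) :
      ShapePair c (GF.neg (GF.disj F₁ F₂)) (GF.conj (GF.neg F₁) (GF.neg F₂))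
  | s9 (x : GS A) (F₂ : GF A) :
      ShapePair c (GF.neg (GF.obat (GF.base x) F₂))
        (GF.disj (GF.base (GS.compl c x)) (GF.obat (GF.base x) (GF.neg F₂)))
  | s10 (Fa : GF A) : ShapePair c (GF.disj Fa Fa) Fa
  | s11 (Fa : GF A) : ShapePair c (GF.conj Fa Fa) Fa
  | s12 (Fa Fb : GF A) : ShapePair c (GF.conj Fa Fb) (GF.conj Fb Fa)
  | s13 (Fa Fb : GF A) : ShapePair c (GF.disj Fa Fb) (GF.disj Fb Fa)
  | s14 (Fa Fb Fc : GF A) :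
      ShapePair c (GF.conj Fa (GF.conj Fb Fc)) (GF.conj (GF.conj Fa Fb) Fc)
  | s15 (Fa Fb Fc : GF A) :
      ShapePair c (GF.disj Fa (GF.disj Fb Fc)) (GF.disj (GF.disj Fa Fb) Fc)

/-- `ReplaceAt R F F'`: F' is obtained from F by replacing one occurrence of a
subformula related by R (in either direction). -/
inductive ReplaceAt {A : Type} (R : GF A → GF A → Prop) : GF A → GF A → Prop
  | here {F F' : GF A} : R F F' → ReplaceAt R F F'
  | here_rev {F F' : GF A} : R F' F → ReplaceAt R F F'
  | conj_left {F F' : GF A} (G : GF A) :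
      ReplaceAt R F F' → ReplaceAt R (GF.conj F G) (GF.conj F' G)
  | conj_right (F : GF A) {G G' : GF A} :
      ReplaceAt R G G' → ReplaceAt R (GF.conj F G) (GF.conj F G')
  | disj_left {F F' : GF A} (G : GF A) :
      ReplaceAt R F F' → ReplaceAt R (GF.disj F G) (GF.disj F' G)
  | disj_right (F : GF A) {G G' : GF A} :
      ReplaceAt R G G' → ReplaceAt R (GF.disj F G) (GF.disj F G')
  | neg_congr {F F' : GF A} :
      ReplaceAt R F F' → ReplaceAt R (GF.neg F) (GF.neg F')
  | obat_left {F F' : GF A} (G : GF A) :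
      ReplaceAt R F F' → ReplaceAt R (GF.obat F G) (GF.obat F' G)
  | obat_right (F : GF A) {G G' : GF A} :
      ReplaceAt R G G' → ReplaceAt R (GF.obat F G) (GF.obat F G')

theorem Reduces.map {A : Type} {c : A → A} (f : GF A → GF A)
    (hf : ∀ X Y, Step c X Y → Step c (f X) (f Y)) {F G : GF A} (h : Reduces c F G) :
    Reduces c (f F) (f G) := by
  induction h with
  | refl => exact .refl
  | tail _ hs ih => exact Relation.ReflTransGen.tail ih (hf _ _ hs)

/-- `F` reduces to some formula in unit chain expansion. -/
def Expandable {A : Type} (c : A → A) (F : GF A) : Prop :=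
  ∃ G : GF A, UCE G ∧ Reduces c F G

namespace Expandable

variable {A : Type} {c : A → A} {F G : GF A}

theorem of_uce (h : UCE F) : Expandable c F := ⟨F, h, .refl⟩

theorem of_reduces (h : Reduces c F G) : Expandable c G → Expandable c F :=
  fun ⟨H, hH, hr⟩ => ⟨H, hH, Relation.ReflTransGen.trans h hr⟩

theorem of_step (h : Step c F G) : Expandable c G → Expandable c F :=
  of_reduces (Relation.ReflTransGen.single h)

theorem conj : Expandable c F → Expandable c G → Expandable c (GF.conj F G) :=
  fun ⟨F', hF, rF⟩ ⟨G', hG, rG⟩ => ⟨GF.conj F' G', hF.conj hG,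
    Relation.ReflTransGen.trans
      (Reduces.map (fun X => GF.conj X G) (fun _ _ => Step.conj_left G) rF)
      (Reduces.map (fun X => GF.conj F' X) (fun _ _ => Step.conj_right F') rG)⟩

theorem disj : Expandable c F → Expandable c G → Expandable c (GF.disj F G) :=
  fun ⟨F', hF, rF⟩ ⟨G', hG, rG⟩ => ⟨GF.disj F' G', hF.disj hG,
    Relation.ReflTransGen.trans
      (Reduces.map (fun X => GF.disj X G) (fun _ _ => Step.disj_left G) rF)
      (Reduces.map (fun X => GF.disj F' X) (fun _ _ => Step.disj_right F') rG)⟩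

theorem obat_base_uce (x : GS A) (h : UCE G) : Expandable c (GF.obat (GF.base x) G) := by
  induction h with
  | base y => exact of_uce (.chain (.base x y))
  | chain h => exact of_uce (.chain (.cons x h))
  | conj _ _ ih₁ ih₂ => exact of_step (.ob4 _ _ _) (ih₁.conj ih₂)
  | disj _ _ ih₁ ih₂ => exact of_step (.ob5 _ _ _) (ih₁.disj ih₂)

theorem obat_base (x : GS A) : Expandable c G → Expandable c (GF.obat (GF.base x) G) :=
  fun ⟨_, hH, hr⟩ => of_reduces
    (Reduces.map (GF.obat (GF.base x)) (fun _ _ => Step.obat_right _) hr)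
    (obat_base_uce x hH)

theorem obat_chain (hF : IsUnitChain F) (hG : UCE G) : Expandable c (GF.obat F G) := by
  induction hF with
  | base x y =>
    exact of_step (.ob1 _ _ _) ((obat_base_uce x hG).conj
      ((of_uce (.chain (.base x y))).disj (obat_base x (obat_base_uce y hG))))
  | cons x h ih =>
    exact of_step (.ob1 _ _ _) ((obat_base_uce x hG).conj
      ((of_uce (.chain (.cons x h))).disj (obat_base x ih)))

theorem obat_uce (hF : UCE F) (hG : UCE G) : Expandable c (GF.obat F G) := by
  induction hF with
  | base x => exact obat_base_uce x hG
  | chain h => exact obat_chain h hG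
  | conj _ _ ih₁ ih₂ => exact of_step (.ob2 _ _ _) (ih₁.conj ih₂)
  | disj _ _ ih₁ ih₂ => exact of_step (.ob3 _ _ _) (ih₁.disj ih₂)

theorem obat : Expandable c F → Expandable c G → Expandable c (GF.obat F G) :=
  fun ⟨F', hF, rF⟩ ⟨_, hG, rG⟩ => of_reduces
    (Relation.ReflTransGen.trans
      (Reduces.map (fun X => GF.obat X G) (fun _ _ => Step.obat_left G) rF)
      (Reduces.map (fun X => GF.obat F' X) (fun _ _ => Step.obat_right F') rG))
    (obat_uce hF hG)

theorem neg_base (x : GS A) : Expandable c (GF.neg (GF.base x)) :=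
  of_step (.neg1 x) (of_uce (.base _))

theorem neg_chain (h : IsUnitChain F) : Expandable c (GF.neg F) := by
  induction h with
  | base x y =>
    exact of_step (.neg4 _ _) ((of_uce (.base _)).disj (obat_base x (neg_base y)))
  | cons x _ ih => exact of_step (.neg4 _ _) ((of_uce (.base _)).disj (obat_base x ih))

theorem neg_uce (h : UCE F) : Expandable c (GF.neg F) := by
  induction h with
  | base x => exact neg_base x
  | chain h => exact neg_chain h
  | conj _ _ ih₁ ih₂ => exact of_step (.neg2 _ _) (ih₁.disj ih₂)
  | disj _ _ ih₁ ih₂ => exact of_step (.neg3 _ _) (ih₁.conj ih₂)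

theorem neg : Expandable c F → Expandable c (GF.neg F) :=
  fun ⟨_, hH, hr⟩ => of_reduces
    (Reduces.map GF.neg (fun _ _ => Step.neg_congr) hr) (neg_uce hH)

end Expandable

/-- Reduction lemma: every formula reduces to some formula in
unit chain expansion. -/
theorem reduction_lemma (A : Type) [Countable A] [Infinite A]
    (c : A → A) (hc : Function.Involutive c) (F : GF A) :
    ∃ G : GF A, UCE G ∧ Reduces c F G := by
  change Expandable c F
  induction F with
  | base x => exact .of_uce (.base x)
  | conj _ _ ih₁ ih₂ => exact ih₁.conj ih₂
  | disj _ _ ih₁ ih₂ => exact ih₁.disj ih₂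
  | neg _ ih => exact ih.neg
  | obat _ _ ih₁ ih₂ => exact ih₁.obat ih₂

end GradualLogic
end

section
/- Reduction of negated unit chain expansion: if F is a formula of gradual classical logic in unit chain expansion, then ¬F reduces via the ¬ reductions and ⋗ reductions to recursiveReduce(F); moreover recursiveReduce(F) is the unique reduction of ¬F, i.e. the unique formula in unit chain expansion to which ¬F reduces. -/
/-!
Existence is an induction on `F`: the ¬-rules push the negation through `F`, and each
`s ⋗ -` created on the way is distributed over ∧ and ∨ (`reduces_distOb`).

Uniqueness needs no general confluence theorem. Every reduct of `¬F` stays in the class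
`Good`, where ¬ is applied only to unit chain expansions (which are irreducible) and every
⋗ has a head in 𝒮, so that (⋗1)–(⋗3) never fire. On this class the function `nform` is invariant
under reduction (`Good.step`); it sends `¬F` to `recursiveReduce F` and fixes every unit chain
expansion, so a unit chain expansion reached from `¬F` equals `recursiveReduce F`.
-/

namespace GradualLogic

/-- The unit chain expansion towards which a formula is reduced: ¬ is evaluated by
`recursiveReduce` and `s ⋗ -` by `distOb`. The value is meaningful on `Good` formulas only. -/
def nform {A : Type} (c : A → A) : GF A → GF A
  | GF.base x => GF.base x
  | GF.conj F G => GF.conj (nform c F) (nform c G)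
  | GF.disj F G => GF.disj (nform c F) (nform c G)
  | GF.neg F => recursiveReduce c F
  | GF.obat (GF.base x) F => distOb x (nform c F)
  | GF.obat F G => GF.obat F G

/-- A class containing every reduct of the negation of a unit chain expansion: ¬ is applied
only to unit chain expansions and the head of every ⋗ is an element of 𝒮. -/
inductive Good {A : Type} : GF A → Prop
  | base (x : GS A) : Good (GF.base x)
  | conj {F G : GF A} : Good F → Good G → Good (GF.conj F G)
  | disj {F G : GF A} : Good F → Good G → Good (GF.disj F G)
  | neg {F : GF A} : UCE F → Good (GF.neg F)
  | obat (x : GS A) {F : GF A} : Good F → Good (GF.obat (GF.base x) F)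

lemma IsUnitChain.not_step {A : Type} {c : A → A} {F F' : GF A} (h : IsUnitChain F) :
    ¬ Step c F F' := by
  induction h generalizing F' with
  | base x y =>
    intro hs
    cases hs with
    | obat_left _ h => cases h
    | obat_right _ h => cases h
  | cons x h ih =>
    intro hs
    cases hs with
    | ob4 => cases h
    | ob5 => cases h
    | obat_left _ h => cases h
    | obat_right _ h => exact ih h

lemma UCE.not_step {A : Type} {c : A → A} {F F' : GF A} (h : UCE F) : ¬ Step c F F' := by
  induction h generalizing F' with
  | base x => intro hs; cases hs
  | chain h => exact h.not_step
  | conj _ _ ih₁ ih₂ =>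
    intro hs
    cases hs with
    | conj_left _ h => exact ih₁ h
    | conj_right _ h => exact ih₂ h
  | disj _ _ ih₁ ih₂ =>
    intro hs
    cases hs with
    | disj_left _ h => exact ih₁ h
    | disj_right _ h => exact ih₂ h

lemma UCE.of_conj {A : Type} {F G : GF A} (h : UCE (GF.conj F G)) : UCE F ∧ UCE G := by
  cases h with
  | chain h => cases h
  | conj h₁ h₂ => exact ⟨h₁, h₂⟩

lemma UCE.of_disj {A : Type} {F G : GF A} (h : UCE (GF.disj F G)) : UCE F ∧ UCE G := by
  cases h with
  | chain h => cases h
  | disj h₁ h₂ => exact ⟨h₁, h₂⟩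

lemma UCE.of_obat {A : Type} {F G : GF A} (h : UCE (GF.obat F G)) : UCE G := by
  cases h with
  | chain h =>
    cases h with
    | base x y => exact UCE.base y
    | cons x h => exact UCE.chain h

lemma IsUnitChain.nform_eq {A : Type} (c : A → A) {F : GF A} (h : IsUnitChain F) :
    nform c F = F := by
  induction h with
  | base x y => rfl
  | cons x h ih =>
    rw [nform, ih]
    cases h <;> rfl

lemma UCE.nform_eq {A : Type} (c : A → A) {F : GF A} (h : UCE F) : nform c F = F := by
  induction h with
  | base x => rfl
  | chain h => exact h.nform_eq c
  | conj _ _ ih₁ ih₂ => rw [nform, ih₁, ih₂]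
  | disj _ _ ih₁ ih₂ => rw [nform, ih₁, ih₂]

/-- Reduction preserves `Good` and leaves `nform` invariant; this is what forces uniqueness. -/
lemma Good.step {A : Type} {c : A → A} {F F' : GF A} (h : Good F) (hs : Step c F F') :
    Good F' ∧ nform c F' = nform c F := by
  induction h generalizing F' with
  | base x => cases hs
  | conj h₁ h₂ ih₁ ih₂ =>
    cases hs with
    | conj_left _ h => exact ⟨.conj (ih₁ h).1 h₂, by rw [nform, nform, (ih₁ h).2]⟩
    | conj_right _ h => exact ⟨.conj h₁ (ih₂ h).1, by rw [nform, nform, (ih₂ h).2]⟩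
  | disj h₁ h₂ ih₁ ih₂ =>
    cases hs with
    | disj_left _ h => exact ⟨.disj (ih₁ h).1 h₂, by rw [nform, nform, (ih₁ h).2]⟩
    | disj_right _ h => exact ⟨.disj h₁ (ih₂ h).1, by rw [nform, nform, (ih₂ h).2]⟩
  | neg h =>
    cases hs with
    | neg1 x => exact ⟨.base _, rfl⟩
    | neg2 => exact ⟨.disj (.neg h.of_conj.1) (.neg h.of_conj.2), rfl⟩
    | neg3 => exact ⟨.conj (.neg h.of_disj.1) (.neg h.of_disj.2), rfl⟩
    | neg4 => exact ⟨.disj (.base _) (.obat _ (.neg h.of_obat)), rfl⟩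
    | neg_congr h' => exact absurd h' h.not_step
  | obat x h ih =>
    cases hs with
    | ob4 =>
      cases h with
      | conj h₁ h₂ => exact ⟨.conj (.obat _ h₁) (.obat _ h₂), rfl⟩
    | ob5 =>
      cases h with
      | disj h₁ h₂ => exact ⟨.disj (.obat _ h₁) (.obat _ h₂), rfl⟩
    | obat_left _ h' => cases h'
    | obat_right _ h' => exact ⟨.obat _ (ih h').1, by rw [nform, nform, (ih h').2]⟩

lemma Good.reduces {A : Type} {c : A → A} {F F' : GF A} (h : Good F) (hr : Reduces c F F') :
    Good F' ∧ nform c F' = nform c F := by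
  induction hr with
  | refl => exact ⟨h, rfl⟩
  | tail _ hs ih => exact ⟨(ih.1.step hs).1, (ih.1.step hs).2.trans ih.2⟩

lemma Reduces.conj {A : Type} {c : A → A} {F F' G G' : GF A} (h₁ : Reduces c F F')
    (h₂ : Reduces c G G') : Reduces c (GF.conj F G) (GF.conj F' G') :=
  Relation.ReflTransGen.trans
    (Relation.ReflTransGen.lift (fun X => GF.conj X G) (fun _ _ h => Step.conj_left G h) _ _ h₁)
    (Relation.ReflTransGen.lift (fun X => GF.conj F' X) (fun _ _ h => Step.conj_right F' h) _ _ h₂)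

lemma Reduces.disj {A : Type} {c : A → A} {F F' G G' : GF A} (h₁ : Reduces c F F')
    (h₂ : Reduces c G G') : Reduces c (GF.disj F G) (GF.disj F' G') :=
  Relation.ReflTransGen.trans
    (Relation.ReflTransGen.lift (fun X => GF.disj X G) (fun _ _ h => Step.disj_left G h) _ _ h₁)
    (Relation.ReflTransGen.lift (fun X => GF.disj F' X) (fun _ _ h => Step.disj_right F' h) _ _ h₂)

lemma Reduces.obat_right {A : Type} {c : A → A} (F : GF A) {G G' : GF A}
    (h : Reduces c G G') : Reduces c (GF.obat F G) (GF.obat F G') :=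
  Relation.ReflTransGen.lift (fun X => GF.obat F X) (fun _ _ h => Step.obat_right F h) _ _ h

lemma reduces_distOb {A : Type} (c : A → A) (x : GS A) (F : GF A) :
    Reduces c (GF.obat (GF.base x) F) (distOb x F) := by
  induction F with
  | conj F G ih₁ ih₂ => exact Relation.ReflTransGen.head (Step.ob4 _ _ _) (ih₁.conj ih₂)
  | disj F G ih₁ ih₂ => exact Relation.ReflTransGen.head (Step.ob5 _ _ _) (ih₁.disj ih₂)
  | _ => exact Relation.ReflTransGen.refl

lemma UCE.distOb {A : Type} (x : GS A) {F : GF A} (h : UCE F) : UCE (distOb x F) := by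
  induction h with
  | base y => exact .chain (.base x y)
  | chain h => cases h with
    | base y z => exact .chain (.cons x (.base y z))
    | cons y h => exact .chain (.cons x (.cons y h))
  | conj _ _ ih₁ ih₂ => exact .conj ih₁ ih₂
  | disj _ _ ih₁ ih₂ => exact .disj ih₁ ih₂

/-- The common induction step for negated chains, from the tail to the whole chain. -/
lemma neg_obat_reduces {A : Type} {c : A → A} (x : GS A) {F : GF A}
    (h : Reduces c (GF.neg F) (recursiveReduce c F) ∧ UCE (recursiveReduce c F)) :
    Reduces c (GF.neg (GF.obat (GF.base x) F)) (recursiveReduce c (GF.obat (GF.base x) F)) ∧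
      UCE (recursiveReduce c (GF.obat (GF.base x) F)) :=
  ⟨Relation.ReflTransGen.head (Step.neg4 x F) (Reduces.disj Relation.ReflTransGen.refl
      ((h.1.obat_right _).trans (reduces_distOb c x _))),
    .disj (.base _) (h.2.distOb x)⟩

lemma neg_base_reduces {A : Type} (c : A → A) (x : GS A) :
    Reduces c (GF.neg (GF.base x)) (recursiveReduce c (GF.base x)) ∧
      UCE (recursiveReduce c (GF.base x)) :=
  ⟨Relation.ReflTransGen.single (Step.neg1 x), .base _⟩

lemma UCE.neg_reduces {A : Type} (c : A → A) {F : GF A} (hF : UCE F) :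
    Reduces c (GF.neg F) (recursiveReduce c F) ∧ UCE (recursiveReduce c F) := by
  induction hF with
  | base x => exact neg_base_reduces c x
  | chain h =>
    induction h with
    | base x y => exact neg_obat_reduces x (neg_base_reduces c y)
    | cons x h ih => exact neg_obat_reduces x ih
  | conj _ _ ih₁ ih₂ =>
    exact ⟨Relation.ReflTransGen.head (Step.neg2 _ _) (ih₁.1.disj ih₂.1), .disj ih₁.2 ih₂.2⟩
  | disj _ _ ih₁ ih₂ =>
    exact ⟨Relation.ReflTransGen.head (Step.neg3 _ _) (ih₁.1.conj ih₂.1), .conj ih₁.2 ih₂.2⟩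

/-- Reduction of negated unit chain expansion: if F is in unit
chain expansion, then ¬F reduces to recursiveReduce(F), which is the unique
formula in unit chain expansion to which ¬F reduces. -/
theorem negated_unit_chain_expansion_reduction (A : Type) [Countable A] [Infinite A]
    (c : A → A) (hc : Function.Involutive c) (F : GF A) (hF : UCE F) :
    Reduces c (GF.neg F) (recursiveReduce c F) ∧
    UCE (recursiveReduce c F) ∧
    ∀ G : GF A, UCE G → Reduces c (GF.neg F) G → G = recursiveReduce c F := by
  refine ⟨(hF.neg_reduces c).1, (hF.neg_reduces c).2, fun G hG hr => ?_⟩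
  rw [← hG.nform_eq c, ((Good.neg hF).reduces hr).2, nform]

end GradualLogic
end

section
/- Normalisation: for every formula F of gradual classical logic and every valuation frame M, all formulas in unit chain expansion to which F reduces receive the same value under M; that is, either [M ⊨ F_a] = 1 for all formulas F_a in unit chain expansion to which F reduces, or [M ⊨ F_a] = 0 for all such F_a. -/
/-!
The valuation of unit chain expansions extends to a two-valued semantics on *all* formulas.
By synchronization the local value of `s` depends only on the depth at which `s` is read, so
let a formula be evaluated at a depth `n`: `∧`, `∨`, `¬` are classical at the same depth, and
`F ⋗ G` holds at depth `n` iff `F` holds at depth `n` and `G` holds at depth `n + 1`.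
Every reduction rule is then a propositional equivalence at every depth (`Step.sat_iff`); in
`(F₁ ⋗ F₂) ⋗ F₃` both `F₂` and `F₃` are read at depth `n + 1`, and the extra disjunct
`F₁ ⋗ (F₂ ⋗ F₃)` produced by the rule is absorbed by `F₁ ⋗ F₂`. On unit chain expansions
this semantics is the given valuation (`UCE.valAux_eq`), so the common value of all
expansions of `F` is the truth value of `F` at depth `0`.
-/

namespace GradualLogic

/-- Truth of an arbitrary formula at depth `n`. The local interpretation at depth `n` is
read off at the sequence `⊤.⋯.⊤` of length `n`, as good as any other by synchronization. -/
def Frame.Sat {A : Type} {c : A → A} (M : Frame A c) : ℕ → GF A → Prop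
  | n, GF.base x => M.I (List.replicate n GS.top) x = 1
  | n, GF.conj F G => M.Sat n F ∧ M.Sat n G
  | n, GF.disj F G => M.Sat n F ∨ M.Sat n G
  | n, GF.neg F => ¬ M.Sat n F
  | n, GF.obat F G => M.Sat n F ∧ M.Sat (n + 1) G

lemma Frame.I_compl_eq_one {A : Type} {c : A → A} (M : Frame A c) (ψ : List (GS A)) (x : GS A) :
    M.I ψ (GS.compl c x) = 1 ↔ ¬ M.I ψ x = 1 := by
  have h := M.I01 ψ x
  rw [M.Icompl]
  omega

lemma Step.sat_iff {A : Type} {c : A → A} (M : Frame A c) {F G : GF A} (h : Step c F G) :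
    ∀ n, M.Sat n F ↔ M.Sat n G := by
  induction h with
  | neg1 x => intro n; simp only [Frame.Sat, M.I_compl_eq_one]
  | neg4 x F₂ => intro n; simp only [Frame.Sat, M.I_compl_eq_one]; tauto
  | neg2 | neg3 | ob1 | ob2 | ob3 | ob4 | ob5 => intro n; simp only [Frame.Sat]; tauto
  | conj_left _ _ ih | conj_right _ _ ih | disj_left _ _ ih | disj_right _ _ ih
  | neg_congr _ ih | obat_left _ _ ih | obat_right _ _ ih =>
    intro n; simp only [Frame.Sat, ih]

lemma Reduces.sat_iff {A : Type} {c : A → A} (M : Frame A c) {F G : GF A}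
    (h : Reduces c F G) (n : ℕ) : M.Sat n F ↔ M.Sat n G := by
  induction h with
  | refl => rfl
  | tail _ hs ih => exact ih.trans (hs.sat_iff M n)

open Classical in
lemma Frame.I_eq {A : Type} {c : A → A} (M : Frame A c) (ψ : List (GS A)) (x : GS A) :
    M.I ψ x = if M.Sat ψ.length (GF.base x) then 1 else 0 := by
  have hs := M.Isync ψ (List.replicate ψ.length GS.top) x (by simp)
  have h := M.I01 ψ x
  simp only [Frame.Sat, ← hs]
  split_ifs <;> omega

open Classical in
lemma IsUnitChain.valAux_eq {A : Type} {c : A → A} (M : Frame A c) {F : GF A}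
    (h : IsUnitChain F) :
    ∀ ψ : List (GS A), M.valAux ψ F = if M.Sat ψ.length F then 1 else 0 := by
  induction h with
  | base x y =>
    intro ψ
    rw [Frame.valAux, Frame.valAux, M.I_eq ψ, M.I_eq (ψ ++ [x]), List.length_append,
      List.length_singleton, Frame.Sat.eq_5]
    split_ifs <;> first | rfl | tauto
  | cons x _ ih =>
    intro ψ
    rw [Frame.valAux, ih, M.I_eq ψ, List.length_append, List.length_singleton, Frame.Sat.eq_5]
    split_ifs <;> first | rfl | tauto

open Classical in
lemma UCE.valAux_eq {A : Type} {c : A → A} (M : Frame A c) {F : GF A} (h : UCE F)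
    (ψ : List (GS A)) : M.valAux ψ F = if M.Sat ψ.length F then 1 else 0 := by
  induction h with
  | base x => rw [Frame.valAux, M.I_eq]
  | chain h => exact h.valAux_eq M ψ
  | conj _ _ ihF ihG =>
    rw [Frame.valAux, ihF, ihG, Frame.Sat.eq_2]
    split_ifs <;> first | rfl | tauto
  | disj _ _ ihF ihG =>
    rw [Frame.valAux, ihF, ihG, Frame.Sat.eq_3]
    split_ifs <;> first | rfl | tauto

/-- Normalisation: for every formula F and every valuation frame
M, either all formulas in unit chain expansion to which F reduces receive value 1
under M, or they all receive value 0. -/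
theorem normalisation (A : Type) [Countable A] [Infinite A]
    (c : A → A) (hc : Function.Involutive c)
    (F : GF A) (M : Frame A c) :
    (∀ Fa : GF A, UCE Fa → Reduces c F Fa → M.val Fa = 1) ∨
    (∀ Fa : GF A, UCE Fa → Reduces c F Fa → M.val Fa = 0) := by
  by_cases h : M.Sat 0 F
  · refine Or.inl fun Fa hu hr => ?_
    rw [Frame.val, hu.valAux_eq]
    exact if_pos ((hr.sat_iff M 0).1 h)
  · refine Or.inr fun Fa hu hr => ?_
    rw [Frame.val, hu.valAux_eq]
    exact if_neg fun h' => h ((hr.sat_iff M 0).2 h')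

end GradualLogic
end
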